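/- Let n ≥ m ≥ 1 with nm ≥ 2, and let B_1,…,B_r ∈ ℝ^{n×m} satisfy Σ_{k=1}^r B_k^⊤B_k = I_m and Σ_{k=1}^r B_kB_k^⊤ ⪯ I_n. Let z_1,…,z_r be independent standard Gaussian real random variables, set G = Σ_{k=1}^r z_k B_k and W = Σ_{k=1}^r vec(B_k)vec(B_k)^⊤. For T ≥ 0 define β_{n,m}(T) := inf_{λ∈[0,1]} ∫₀^T (1 + 2tm(1−λ)/(nm−1))^{−(nm−1)/2}(1 + 2tmλ)^{−3/2} dt. Then for every T ≥ 0 and every δ ∈ (0,1), and for every v ∈ ℝ^{nm}: E[(v^⊤vec(G))²/σmax(G)²] ≥ ( β_{n,m}(T) + (1 − √δ)·e^{−2T·log(6m/δ)}/(2·log(6m/δ)) ) · v^⊤Wv. -/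

import Mathlib

open MeasureTheory ProbabilityTheory Matrix

/-- The largest singular value (spectral norm) of a real matrix. -/
noncomputable def sigmaMax {n m : ℕ} (G : Matrix (Fin n) (Fin m) ℝ) : ℝ :=
  ‖LinearMap.toContinuousLinearMap (Matrix.toEuclideanLin G)‖

/-- `vec(U)`: stacking the columns of `U`, indexed by (column, row) pairs. -/
def vecM {n m : ℕ} (U : Matrix (Fin n) (Fin m) ℝ) : Fin m × Fin n → ℝ :=
  fun p => U p.2 p.1

/-- `β_{n,m}(T) = inf_{λ∈[0,1]} ∫₀^T (1 + 2tm(1−λ)/(nm−1))^{−(nm−1)/2} (1 + 2tmλ)^{−3/2} dt`. -/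
noncomputable def betaNMT (n m : ℕ) (T : ℝ) : ℝ :=
  ⨅ l : Set.Icc (0 : ℝ) 1,
    ∫ t in (0 : ℝ)..T,
      (1 + 2 * t * m * (1 - (l : ℝ)) / ((n : ℝ) * m - 1)) ^ (-(((n : ℝ) * m - 1) / 2))
        * (1 + 2 * t * m * (l : ℝ)) ^ (-(3 / 2 : ℝ))

/-! With `s = σmax(G)²`, split `1 / s = ∫₀ᵀ e^{-ts} dt + e^{-Ts} / s`.

For the integral, replace `s` by `‖vec G‖² ≥ s`. The Gaussian expectation
`E[(vᵀ vec G)² e^{-t‖vec G‖²}]` is explicit in the eigenvalues of `W`, whose sum is at most `m`.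
For each eigenvalue, AM-GM applied to the `nm - 1` others bounds the corresponding term below by
the integrand of `β`.

For the remainder, keep only the event `s < 2q` with `q = log(6m/δ)`. The trace moments of the
Hermitian dilation of `G`, bounded through Gaussian integration by parts, show that its complement
has probability at most `2m e^{-q} = δ/3`. As `E[(vᵀ vec G)⁴] = 3 (vᵀWv)²`, the Cauchy-Schwarz
inequality leaves at least the fraction `1 - √δ` of `vᵀWv` on that event.
-/

open scoped Matrix.Norms.L2Operator

theorem setIntegral_le_sqrt_mul_sqrt {α : Type*} [MeasurableSpace α] {μ : Measure α}
    [IsFiniteMeasure μ] {f : α → ℝ} (hf : MemLp f 2 μ) (hf0 : 0 ≤ f) (s : Set α) :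
    ∫ x in s, f x ∂μ ≤ √(μ.real s) * √(∫ x, f x ^ 2 ∂μ) := by
  have hholder := integral_mul_le_Lp_mul_Lq_of_nonneg (μ := μ.restrict s) (f := fun _ ↦ 1) (g := f)
    (p := 2) (q := 2) ⟨by norm_num, by norm_num, by norm_num⟩ (.of_forall fun _ ↦ zero_le_one)
    (.of_forall hf0) (memLp_const 1) (by simpa using hf.restrict s)
  simp only [one_mul, one_pow, integral_const, smul_eq_mul, mul_one, Real.rpow_ofNat,
    measureReal_restrict_apply_univ, ← Real.sqrt_eq_rpow] at hholder
  refine hholder.trans (mul_le_mul_of_nonneg_left (Real.sqrt_le_sqrt ?_) (Real.sqrt_nonneg _))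
  exact setIntegral_le_integral hf.integrable_sq (.of_forall fun x ↦ sq_nonneg (f x))

section GaussianReal

variable {μ : ℝ} {v : NNReal}

theorem integrable_pow_gaussianReal (a : ℕ) :
    Integrable (fun x : ℝ ↦ x ^ a) (gaussianReal μ v) := by
  have h := (memLp_id_gaussianReal (μ := μ) (v := v) (a : NNReal)).integrable_norm_pow'
  refine (integrable_norm_iff (by fun_prop)).1 ?_
  simpa using h

theorem hasDerivAt_gaussianPDFReal (hv : v ≠ 0) (x : ℝ) :
    HasDerivAt (gaussianPDFReal μ v) (-(x - μ) / v * gaussianPDFReal μ v x) x := by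
  have hexponent : HasDerivAt (fun x ↦ -(x - μ) ^ 2 / (2 * (v : ℝ))) (-(x - μ) / v) x :=
    ((((hasDerivAt_id x).sub_const μ).pow 2).neg.div_const (2 * (v : ℝ))).congr_deriv <| by
      simp only [id]
      field_simp
      ring
  rw [gaussianPDFReal_def]
  exact (hexponent.exp.const_mul _).congr_deriv (by ring)

theorem integrable_gaussianReal_iff {f : ℝ → ℝ} (hv : v ≠ 0) :
    Integrable f (gaussianReal μ v) ↔ Integrable fun x ↦ gaussianPDFReal μ v x * f x := by
  rw [gaussianReal_of_var_ne_zero μ hv, integrable_withDensity_iff_integrable_smul'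
    (measurable_gaussianPDF μ v) (.of_forall fun x ↦ ENNReal.ofReal_lt_top)]
  simp only [toReal_gaussianPDF, smul_eq_mul]

theorem integral_sub_mul_gaussianReal {f f' : ℝ → ℝ} (hf : ∀ x, HasDerivAt f (f' x) x)
    (hif : Integrable f (gaussianReal μ v)) (hif' : Integrable f' (gaussianReal μ v))
    (hixf : Integrable (fun x ↦ (x - μ) * f x) (gaussianReal μ v)) :
    ∫ x, (x - μ) * f x ∂gaussianReal μ v = v * ∫ x, f' x ∂gaussianReal μ v := by
  rcases eq_or_ne v 0 with rfl | hv
  · simp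
  have hv' : (v : ℝ) ≠ 0 := NNReal.coe_ne_zero.2 hv
  rw [integrable_gaussianReal_iff hv] at hif hif' hixf
  have hderiv (x : ℝ) : HasDerivAt (fun x ↦ gaussianPDFReal μ v x * f x)
      (gaussianPDFReal μ v x * f' x - (v : ℝ)⁻¹ * (gaussianPDFReal μ v x * ((x - μ) * f x))) x :=
    ((hasDerivAt_gaussianPDFReal hv x).mul (hf x)).congr_deriv (by ring)
  have hzero := integral_eq_zero_of_hasDerivAt_of_integrable hderiv
    (hif'.sub (hixf.const_mul _)) hif
  rw [integral_sub hif' (hixf.const_mul _), integral_const_mul, sub_eq_zero] at hzero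
  simp only [integral_gaussianReal_eq_integral_smul hv, smul_eq_mul]
  rw [hzero, mul_inv_cancel_left₀ hv']

theorem integral_mul_pow_gaussianReal_zero (a : ℕ) :
    ∫ x, x * x ^ a ∂gaussianReal 0 v = v * (a * ∫ x, x ^ (a - 1) ∂gaussianReal 0 v) := by
  have hstein := integral_sub_mul_gaussianReal (μ := 0) (v := v) (fun x ↦ hasDerivAt_pow a x)
    (integrable_pow_gaussianReal a) ((integrable_pow_gaussianReal (a - 1)).const_mul _)
    (by simpa only [sub_zero, pow_succ'] using integrable_pow_gaussianReal (a + 1))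
  simpa only [sub_zero, integral_const_mul] using hstein

end GaussianReal

/-- The standard Gaussian measure on `ℝ^κ`, as a measure on the function type `κ → ℝ`. -/
noncomputable abbrev piGaussian (κ : Type*) [Fintype κ] : Measure (κ → ℝ) :=
  Measure.pi fun _ ↦ gaussianReal 0 1

section Polynomial

open MvPolynomial

variable {κ : Type*} [Fintype κ]

theorem integrable_eval_piGaussian (p : MvPolynomial κ ℝ) :
    Integrable (fun x ↦ eval x p) (piGaussian κ) := by
  induction p using MvPolynomial.induction_on' with
  | monomial u a =>
    simp only [eval_monomial, Finsupp.prod_fintype _ _ fun _ ↦ pow_zero _]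
    exact (Integrable.fintype_prod fun i ↦ integrable_pow_gaussianReal (u i)).const_mul a
  | add p q hp hq => simpa only [map_add] using! hp.add hq

theorem integral_eval_X_mul_monomial_piGaussian (k : κ) (u : κ →₀ ℕ) (a : ℝ) :
    ∫ x, eval x (X k * monomial u a) ∂piGaussian κ
      = ∫ x, eval x (pderiv k (monomial u a)) ∂piGaussian κ := by
  classical
  simp only [pderiv_monomial, eval_monomial, map_mul, eval_X,
    Finsupp.prod_fintype _ _ fun _ ↦ pow_zero _]
  have hfactor (x : κ → ℝ) : x k * (a * ∏ i, x i ^ u i)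
      = a * ∏ i, ((if i = k then x i else 1) * x i ^ u i) := by
    rw [Finset.prod_mul_distrib, Finset.prod_ite_eq' Finset.univ k, if_pos (Finset.mem_univ k)]
    ring
  have hoff : ∀ i ∈ Finset.univ.erase k,
      ∫ y, (if i = k then y else 1) * y ^ u i ∂gaussianReal 0 1
        = ∫ y, y ^ (u - Finsupp.single k 1 : κ →₀ ℕ) i ∂gaussianReal 0 1 := by
    intro i hi
    simp [Finset.ne_of_mem_erase hi]
  simp_rw [hfactor, integral_const_mul]
  rw [integral_fintype_prod_eq_prod fun i (y : ℝ) ↦ (if i = k then y else 1) * y ^ u i,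
    integral_fintype_prod_eq_prod fun i (y : ℝ) ↦ y ^ (u - Finsupp.single k 1 : κ →₀ ℕ) i,
    ← Finset.mul_prod_erase _ _ (Finset.mem_univ k),
    ← Finset.mul_prod_erase _ _ (Finset.mem_univ k), Finset.prod_congr rfl hoff]
  simp only [if_true, integral_mul_pow_gaussianReal_zero, NNReal.coe_one, one_mul,
    Finsupp.tsub_apply, Finsupp.single_eq_same]
  ring

theorem integral_eval_X_mul_piGaussian (k : κ) (p : MvPolynomial κ ℝ) :
    ∫ x, eval x (X k * p) ∂piGaussian κ = ∫ x, eval x (pderiv k p) ∂piGaussian κ := by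
  induction p using MvPolynomial.induction_on' with
  | monomial u a => exact integral_eval_X_mul_monomial_piGaussian k u a
  | add p q hp hq =>
    simp only [mul_add, map_add]
    rw [integral_add (integrable_eval_piGaussian _) (integrable_eval_piGaussian _),
      integral_add (integrable_eval_piGaussian _) (integrable_eval_piGaussian _), hp, hq]

/-- The linear form `x ↦ c ⬝ᵥ x` as a polynomial. -/
noncomputable def linearForm (c : κ → ℝ) : MvPolynomial κ ℝ :=
  ∑ k, c k • X k

theorem eval_linearForm (c x : κ → ℝ) : eval x (linearForm c) = c ⬝ᵥ x := by
  simp [linearForm, dotProduct, smul_eval]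

theorem pderiv_linearForm (c : κ → ℝ) (k : κ) : pderiv k (linearForm c) = C (c k) := by
  classical
  simp [linearForm, pderiv_X, Pi.single_apply, smul_eq_C_mul]

theorem integrable_dotProduct_pow_piGaussian (c : κ → ℝ) (a : ℕ) :
    Integrable (fun x ↦ (c ⬝ᵥ x) ^ a) (piGaussian κ) := by
  simpa only [map_pow, eval_linearForm] using integrable_eval_piGaussian (linearForm c ^ a)

theorem integral_dotProduct_pow_add_two_piGaussian (c : κ → ℝ) (a : ℕ) :
    ∫ x, (c ⬝ᵥ x) ^ (a + 2) ∂piGaussian κ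
      = (a + 1) * (c ⬝ᵥ c) * ∫ x, (c ⬝ᵥ x) ^ a ∂piGaussian κ := by
  have hexpand (x : κ → ℝ) : (c ⬝ᵥ x) ^ (a + 2)
      = ∑ k, c k * eval x (X k * linearForm c ^ (a + 1)) := by
    simp only [map_mul, map_pow, eval_X, eval_linearForm, ← mul_assoc, ← Finset.sum_mul]
    rw [pow_succ' _ (a + 1)]
    rfl
  have hstein (k : κ) : ∫ x, eval x (X k * linearForm c ^ (a + 1)) ∂piGaussian κ
      = (a + 1) * c k * ∫ x, (c ⬝ᵥ x) ^ a ∂piGaussian κ := by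
    rw [integral_eval_X_mul_piGaussian, ← integral_const_mul]
    congr with x
    simp [pderiv_linearForm, eval_linearForm]
    ring
  simp_rw [hexpand]
  rw [integral_finsetSum _ fun k _ ↦ (integrable_eval_piGaussian _).const_mul _]
  simp only [integral_const_mul, hstein, dotProduct, Finset.mul_sum, Finset.sum_mul]
  exact Finset.sum_congr rfl fun k _ ↦ by ring

theorem integral_dotProduct_sq_piGaussian (c : κ → ℝ) :
    ∫ x, (c ⬝ᵥ x) ^ 2 ∂piGaussian κ = c ⬝ᵥ c := by
  simpa using integral_dotProduct_pow_add_two_piGaussian c 0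

theorem integral_dotProduct_pow_four_piGaussian (c : κ → ℝ) :
    ∫ x, (c ⬝ᵥ x) ^ 4 ∂piGaussian κ = 3 * (c ⬝ᵥ c) ^ 2 := by
  have h := integral_dotProduct_pow_add_two_piGaussian c 2
  rw [integral_dotProduct_sq_piGaussian] at h
  rw [h]
  push_cast
  ring

theorem setIntegral_dotProduct_sq_piGaussian_le (c : κ → ℝ) (s : Set (κ → ℝ)) :
    ∫ x in s, (c ⬝ᵥ x) ^ 2 ∂piGaussian κ ≤ √(3 * (piGaussian κ).real s) * (c ⬝ᵥ c) := by
  have hsq (x : κ → ℝ) : ((c ⬝ᵥ x) ^ 2) ^ 2 = (c ⬝ᵥ x) ^ 4 := by ring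
  have hmem : MemLp (fun x ↦ (c ⬝ᵥ x) ^ 2) 2 (piGaussian κ) :=
    (memLp_two_iff_integrable_sq (integrable_dotProduct_pow_piGaussian c 2).1).2 <| by
      simpa only [hsq] using integrable_dotProduct_pow_piGaussian c 4
  have h := setIntegral_le_sqrt_mul_sqrt hmem (fun x ↦ sq_nonneg (c ⬝ᵥ x)) s
  simp only [hsq, integral_dotProduct_pow_four_piGaussian] at h
  have hc : 0 ≤ c ⬝ᵥ c := by simpa using dotProduct_self_star_nonneg c
  refine h.trans_eq ?_
  rw [Real.sqrt_mul zero_le_three, Real.sqrt_mul zero_le_three, Real.sqrt_sq hc]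
  ring

end Polynomial

section SpectralTrace

variable {ι : Type*} [Fintype ι] [DecidableEq ι]

theorem isHermitian_pow_eq {𝕜 : Type*} [RCLike 𝕜] {Y : Matrix ι ι 𝕜} (hY : Y.IsHermitian) (q : ℕ) :
    Y ^ q = hY.eigenvectorUnitary * diagonal (fun i ↦ (hY.eigenvalues i : 𝕜) ^ q)
      * star (hY.eigenvectorUnitary : Matrix ι ι 𝕜) := by
  conv_lhs => rw [hY.spectral_theorem, ← map_pow, diagonal_pow, Unitary.conjStarAlgAut_apply]
  rfl

theorem trace_mul_pow_mul_mul_pow {A Y : Matrix ι ι ℝ} (hA : A.IsHermitian) (hY : Y.IsHermitian)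
    (j l : ℕ) :
    trace (A * Y ^ j * A * Y ^ l) = ∑ a, ∑ b,
      ((star (hY.eigenvectorUnitary : Matrix ι ι ℝ) * A * hY.eigenvectorUnitary) a b) ^ 2
        * (hY.eigenvalues b ^ j * hY.eigenvalues a ^ l) := by
  set U : Matrix ι ι ℝ := ↑hY.eigenvectorUnitary
  set d := hY.eigenvalues
  set S := star U * A * U with hS
  have hSsymm (a b : ι) : S b a = S a b := by
    simpa only [hS] using! (isHermitian_conjTranspose_mul_mul U hA).apply a b
  have hpow (q : ℕ) : Y ^ q = U * diagonal (fun i ↦ d i ^ q) * star U := isHermitian_pow_eq hY q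
  calc trace (A * Y ^ j * A * Y ^ l)
      = trace (A * U * diagonal (fun i ↦ d i ^ j) * star U * A * U
          * diagonal (fun i ↦ d i ^ l) * star U) := by
        rw [hpow j, hpow l]
        simp only [Matrix.mul_assoc]
    _ = trace (S * diagonal (fun i ↦ d i ^ j) * (S * diagonal (fun i ↦ d i ^ l))) := by
        rw [trace_mul_comm, hS]
        simp only [Matrix.mul_assoc]
    _ = _ := by
        simp only [trace, diag_apply, mul_apply (M := S * diagonal _), mul_diagonal]
        refine Finset.sum_congr rfl fun a _ ↦ Finset.sum_congr rfl fun b _ ↦ ?_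
        rw [hSsymm a b]
        ring

theorem pow_mul_pow_add_le_of_even {x y : ℝ} {j l : ℕ} (h : Even (j + l)) :
    x ^ j * y ^ l + x ^ l * y ^ j ≤ x ^ (j + l) + y ^ (j + l) := by
  have hrearrange : 0 ≤ (|x| ^ j - |y| ^ j) * (|x| ^ l - |y| ^ l) := by
    rcases le_total |x| |y| with hxy | hxy
    · exact mul_nonneg_of_nonpos_of_nonpos
        (sub_nonpos.2 (pow_le_pow_left₀ (abs_nonneg _) hxy _))
        (sub_nonpos.2 (pow_le_pow_left₀ (abs_nonneg _) hxy _))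
    · exact mul_nonneg (sub_nonneg.2 (pow_le_pow_left₀ (abs_nonneg _) hxy _))
        (sub_nonneg.2 (pow_le_pow_left₀ (abs_nonneg _) hxy _))
  calc x ^ j * y ^ l + x ^ l * y ^ j
      ≤ |x| ^ j * |y| ^ l + |x| ^ l * |y| ^ j := by
        simp only [← abs_pow, ← abs_mul]
        exact add_le_add (le_abs_self _) (le_abs_self _)
    _ ≤ |x| ^ (j + l) + |y| ^ (j + l) := by
        rw [pow_add, pow_add]
        linarith
    _ = x ^ (j + l) + y ^ (j + l) := by rw [h.pow_abs, h.pow_abs]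

theorem trace_mul_pow_mul_mul_pow_le {A Y : Matrix ι ι ℝ} (hA : A.IsHermitian)
    (hY : Y.IsHermitian) {j l : ℕ} (h : Even (j + l)) :
    trace (A * Y ^ j * A * Y ^ l) ≤ trace (A ^ 2 * Y ^ (j + l)) := by
  have hcomm (a b : ℕ) : trace (A * Y ^ a * A * Y ^ b) = trace (A * Y ^ b * A * Y ^ a) := by
    rw [Matrix.mul_assoc (A * Y ^ a), trace_mul_comm, ← Matrix.mul_assoc]
  have hsum : trace (A * Y ^ j * A * Y ^ l) + trace (A * Y ^ l * A * Y ^ j)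
      ≤ trace (A * Y ^ 0 * A * Y ^ (j + l)) + trace (A * Y ^ (j + l) * A * Y ^ 0) := by
    simp only [trace_mul_pow_mul_mul_pow hA hY, ← Finset.sum_add_distrib, ← mul_add]
    refine Finset.sum_le_sum fun a _ ↦ Finset.sum_le_sum fun b _ ↦
      mul_le_mul_of_nonneg_left ?_ (sq_nonneg _)
    have := pow_mul_pow_add_le_of_even (x := hY.eigenvalues b) (y := hY.eigenvalues a) h
    simp only [pow_zero, one_mul, mul_one]
    linarith
  rw [hcomm l j, hcomm (j + l) 0, pow_zero, Matrix.mul_one, ← sq] at hsum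
  linarith

theorem trace_mul_sq_le_of_posSemidef_one_sub {V Z : Matrix ι ι ℝ} (hV : (1 - V).PosSemidef)
    (hZ : Z.IsHermitian) : trace (V * Z ^ 2) ≤ trace (Z ^ 2) := by
  have h := (hV.mul_mul_conjTranspose_same Z).trace_nonneg
  rw [hZ.eq, trace_mul_comm, ← Matrix.mul_assoc, ← sq, trace_mul_comm, Matrix.sub_mul,
    Matrix.one_mul, trace_sub] at h
  linarith

end SpectralTrace

section PolySeries

open MvPolynomial Finset.HasAntidiagonal

variable {ι κ : Type*}

theorem map_pderiv_mul {l m n : Type*} [Fintype m] (k : κ) (M : Matrix l m (MvPolynomial κ ℝ))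
    (N : Matrix m n (MvPolynomial κ ℝ)) :
    (M * N).map (pderiv k) = M.map (pderiv k) * N + M * N.map (pderiv k) := by
  ext i j : 1
  simp only [mul_apply, Matrix.add_apply, map_apply, map_sum, Derivation.leibniz, smul_eq_mul,
    Finset.sum_add_distrib]
  rw [add_comm]
  simp only [mul_comm]

theorem map_pderiv_map_C (k : κ) (M : Matrix ι ι ℝ) : (M.map C).map (pderiv k) = 0 := by
  ext i j : 1
  simp

theorem eval_trace [Fintype ι] [DecidableEq ι] (x : κ → ℝ) (M : Matrix ι ι (MvPolynomial κ ℝ)) :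
    eval x (trace M) = trace ((eval x).mapMatrix M) :=
  AddMonoidHom.map_trace (eval x) M

theorem mapMatrix_eval_map_C [Fintype ι] [DecidableEq ι] (x : κ → ℝ) (M : Matrix ι ι ℝ) :
    (eval x).mapMatrix (M.map C) = M := by
  ext i j
  simp

variable [Fintype κ]

/-- The matrix series `∑ₖ Xₖ Aₖ` whose coefficients are the variables of a polynomial ring, so that
integration by parts for polynomials applies to the entries of its powers. -/
noncomputable def polySeries (A : κ → Matrix ι ι ℝ) : Matrix ι ι (MvPolynomial κ ℝ) :=
  ∑ k, (X k : MvPolynomial κ ℝ) • (A k).map C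

theorem map_pderiv_polySeries (A : κ → Matrix ι ι ℝ) (k : κ) :
    (polySeries A).map (pderiv k) = (A k).map C := by
  classical
  ext i j : 1
  simp [polySeries, Matrix.sum_apply, pderiv_X, Pi.single_apply]

variable [Fintype ι] [DecidableEq ι]

theorem mapMatrix_eval_polySeries (A : κ → Matrix ι ι ℝ) (x : κ → ℝ) :
    (eval x).mapMatrix (polySeries A) = ∑ k, x k • A k := by
  ext i j
  simp [polySeries, Matrix.sum_apply]

theorem map_pderiv_polySeries_pow_succ (A : κ → Matrix ι ι ℝ) (k : κ) (q : ℕ) :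
    (polySeries A ^ (q + 1)).map (pderiv k)
      = ∑ p ∈ antidiagonal q, polySeries A ^ p.1 * (A k).map C * polySeries A ^ p.2 := by
  induction q with
  | zero => simp [map_pderiv_polySeries]
  | succ q ih =>
    rw [pow_succ', map_pderiv_mul, ih, map_pderiv_polySeries, Finset.Nat.sum_antidiagonal_succ,
      Finset.mul_sum]
    simp only [pow_zero, Matrix.one_mul, pow_succ' _ (Prod.fst _), Matrix.mul_assoc]

theorem eval_trace_mul_pow_mul_mul_pow (A : κ → Matrix ι ι ℝ) (M N : Matrix ι ι ℝ) (j l : ℕ)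
    (x : κ → ℝ) :
    eval x (trace (M.map C * polySeries A ^ j * N.map C * polySeries A ^ l))
      = trace (M * (∑ k, x k • A k) ^ j * N * (∑ k, x k • A k) ^ l) := by
  rw [eval_trace, map_mul, map_mul, map_mul, map_pow, map_pow, mapMatrix_eval_map_C,
    mapMatrix_eval_map_C, mapMatrix_eval_polySeries]

theorem eval_trace_mul_pow (A : κ → Matrix ι ι ℝ) (M : Matrix ι ι ℝ) (q : ℕ) (x : κ → ℝ) :
    eval x (trace (M.map C * polySeries A ^ q)) = trace (M * (∑ k, x k • A k) ^ q) := by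
  rw [eval_trace, map_mul, map_pow, mapMatrix_eval_map_C, mapMatrix_eval_polySeries]

theorem integrable_trace_mul_pow (A : κ → Matrix ι ι ℝ) (M : Matrix ι ι ℝ) (q : ℕ) :
    Integrable (fun x ↦ trace (M * (∑ k, x k • A k) ^ q)) (piGaussian κ) :=
  (integrable_eval_piGaussian _).congr (.of_forall (eval_trace_mul_pow A M q))

theorem integrable_trace_mul_pow_mul_mul_pow (A : κ → Matrix ι ι ℝ) (M N : Matrix ι ι ℝ)
    (j l : ℕ) :
    Integrable (fun x ↦ trace (M * (∑ k, x k • A k) ^ j * N * (∑ k, x k • A k) ^ l))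
      (piGaussian κ) :=
  (integrable_eval_piGaussian _).congr (.of_forall (eval_trace_mul_pow_mul_mul_pow A M N j l))

theorem integrable_mul_trace_mul_pow (A : κ → Matrix ι ι ℝ) (M : Matrix ι ι ℝ) (k : κ) (q : ℕ) :
    Integrable (fun x ↦ x k * trace (M * (∑ k, x k • A k) ^ q)) (piGaussian κ) :=
  (integrable_eval_piGaussian (X k * trace (M.map C * polySeries A ^ q))).congr <|
    .of_forall fun x ↦ by simp only [eval_mul, eval_X, eval_trace_mul_pow]

theorem integral_mul_trace_mul_pow_succ (A : κ → Matrix ι ι ℝ) (M : Matrix ι ι ℝ) (k : κ)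
    (q : ℕ) :
    ∫ x, x k * trace (M * (∑ k, x k • A k) ^ (q + 1)) ∂piGaussian κ
      = ∑ p ∈ antidiagonal q,
        ∫ x, trace (M * (∑ k, x k • A k) ^ p.1 * A k * (∑ k, x k • A k) ^ p.2) ∂piGaussian κ := by
  have hpderiv : pderiv k (trace (M.map C * polySeries A ^ (q + 1)))
      = ∑ p ∈ antidiagonal q,
        trace (M.map C * polySeries A ^ p.1 * (A k).map C * polySeries A ^ p.2) := by
    rw [AddMonoidHom.map_trace, map_pderiv_mul, map_pderiv_map_C, Matrix.zero_mul, zero_add,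
      map_pderiv_polySeries_pow_succ, Finset.mul_sum, trace_sum]
    simp only [Matrix.mul_assoc]
  have hstein := integral_eval_X_mul_piGaussian k (trace (M.map C * polySeries A ^ (q + 1)))
  simp only [hpderiv, map_sum] at hstein
  rw [integral_finsetSum _ fun p _ ↦ integrable_eval_piGaussian _] at hstein
  simpa only [eval_mul, eval_X, eval_trace_mul_pow, eval_trace_mul_pow_mul_mul_pow] using hstein

end PolySeries

section Moments

open Finset.HasAntidiagonal
open scoped Nat

variable {ι κ : Type*} [Fintype κ] {A : κ → Matrix ι ι ℝ}

theorem isHermitian_sum_smul (hA : ∀ k, (A k).IsHermitian) (x : κ → ℝ) :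
    (∑ k, x k • A k).IsHermitian :=
  isSelfAdjoint_sum _ fun k _ ↦ (IsSelfAdjoint.all (x k)).smul (hA k)

variable [Fintype ι] [DecidableEq ι]

theorem integral_trace_pow_add_two_le (hA : ∀ k, (A k).IsHermitian) {q : ℕ} (hq : Even q) :
    ∫ x, trace ((∑ k, x k • A k) ^ (q + 2)) ∂piGaussian κ
      ≤ (q + 1) * ∫ x, trace ((∑ k, A k ^ 2) * (∑ k, x k • A k) ^ q) ∂piGaussian κ := by
  have hexpand (x : κ → ℝ) : trace ((∑ k, x k • A k) ^ (q + 2))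
      = ∑ k, x k * trace (A k * (∑ k, x k • A k) ^ (q + 1)) := by
    rw [pow_succ' _ (q + 1), Finset.sum_mul, trace_sum]
    simp only [Matrix.smul_mul, trace_smul, smul_eq_mul]
  have hterm (k : κ) (p : ℕ × ℕ) (hp : p ∈ antidiagonal q) :
      ∫ x, trace (A k * (∑ k, x k • A k) ^ p.1 * A k * (∑ k, x k • A k) ^ p.2) ∂piGaussian κ
        ≤ ∫ x, trace (A k ^ 2 * (∑ k, x k • A k) ^ q) ∂piGaussian κ := by
    obtain rfl : p.1 + p.2 = q := mem_antidiagonal.1 hp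
    exact integral_mono (integrable_trace_mul_pow_mul_mul_pow A _ _ _ _)
      (integrable_trace_mul_pow A _ _) fun x ↦
        trace_mul_pow_mul_mul_pow_le (hA k) (isHermitian_sum_smul hA x) hq
  calc ∫ x, trace ((∑ k, x k • A k) ^ (q + 2)) ∂piGaussian κ
      = ∑ k, ∑ p ∈ antidiagonal q, ∫ x, trace
          (A k * (∑ k, x k • A k) ^ p.1 * A k * (∑ k, x k • A k) ^ p.2) ∂piGaussian κ := by
        simp only [hexpand, ← integral_mul_trace_mul_pow_succ]
        exact integral_finsetSum _ fun k _ ↦ integrable_mul_trace_mul_pow A _ k _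
    _ ≤ ∑ k, ∑ p ∈ antidiagonal q,
          ∫ x, trace (A k ^ 2 * (∑ k, x k • A k) ^ q) ∂piGaussian κ :=
        Finset.sum_le_sum fun k _ ↦ Finset.sum_le_sum fun p hp ↦ hterm k p hp
    _ = (q + 1) * ∫ x, trace ((∑ k, A k ^ 2) * (∑ k, x k • A k) ^ q) ∂piGaussian κ := by
        simp only [Finset.sum_const, Finset.Nat.card_antidiagonal, nsmul_eq_mul, Finset.sum_mul,
          trace_sum, ← Finset.mul_sum]
        rw [integral_finsetSum _ fun k _ ↦ integrable_trace_mul_pow A _ _]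
        push_cast
        rfl

theorem integral_trace_pow_two_mul_le (hA : ∀ k, (A k).IsHermitian)
    (hV : (1 - ∑ k, A k ^ 2).PosSemidef) (p : ℕ) :
    ∫ x, trace ((∑ k, x k • A k) ^ (2 * p + 2)) ∂piGaussian κ
      ≤ (2 * p + 1)‼ * trace (∑ k, A k ^ 2) := by
  induction p with
  | zero => simpa using integral_trace_pow_add_two_le hA Even.zero
  | succ p ih =>
    have hcontract : ∫ x, trace ((∑ k, A k ^ 2) * (∑ k, x k • A k) ^ (2 * p + 2)) ∂piGaussian κ
        ≤ ∫ x, trace ((∑ k, x k • A k) ^ (2 * p + 2)) ∂piGaussian κ := by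
      refine integral_mono (integrable_trace_mul_pow A _ _)
        (by simpa using integrable_trace_mul_pow A 1 (2 * p + 2)) fun x ↦ ?_
      have h := trace_mul_sq_le_of_posSemidef_one_sub hV
        ((isHermitian_sum_smul hA x).pow (p + 1))
      rwa [← pow_mul, show (p + 1) * 2 = 2 * p + 2 by ring] at h
    calc ∫ x, trace ((∑ k, x k • A k) ^ (2 * (p + 1) + 2)) ∂piGaussian κ
        ≤ (2 * (p + 1) + 1) * ∫ x, trace ((∑ k, A k ^ 2) * (∑ k, x k • A k) ^ (2 * p + 2))
            ∂piGaussian κ := by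
          exact_mod_cast integral_trace_pow_add_two_le hA (even_two_mul (p + 1))
      _ ≤ (2 * (p + 1) + 1) * ((2 * p + 1)‼ * trace (∑ k, A k ^ 2)) := by
          gcongr
          exact hcontract.trans ih
      _ = (2 * (p + 1) + 1)‼ * trace (∑ k, A k ^ 2) := by
          rw [show 2 * (p + 1) + 1 = 2 * p + 1 + 2 by ring, Nat.doubleFactorial_add_two]
          push_cast
          ring

theorem factorial_two_mul_eq (p : ℕ) : (2 * p)! = 2 ^ p * p ! * (2 * p - 1)‼ := by
  rcases p with _ | p
  · rfl
  · rw [← Nat.doubleFactorial_two_mul]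
    exact Nat.factorial_eq_mul_doubleFactorial (2 * p + 1)

-- Weighting the `p`-th inequality by `(2q)^p / (2p)!` turns the sum over `p` into
-- `P * cosh (2q) ≤ M * exp q`.
theorem le_two_mul_mul_exp_neg_of_forall_pow_mul_le {P M q : ℝ} (hP : 0 ≤ P) (hq : 0 ≤ q)
    (h : ∀ p : ℕ, (2 * q) ^ p * P ≤ (2 * p - 1)‼ * M) : P ≤ 2 * M * Real.exp (-q) := by
  have hterm (p : ℕ) : P * ((2 * q) ^ (2 * p) / (2 * p)!) ≤ M * (q ^ p / p !) := by
    have : (0 : ℝ) < (2 * p - 1)‼ := by exact_mod_cast Nat.doubleFactorial_pos _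
    have hfact : ((2 * p)! : ℝ) = 2 ^ p * p ! * (2 * p - 1)‼ := by
      exact_mod_cast factorial_two_mul_eq p
    calc P * ((2 * q) ^ (2 * p) / (2 * p)!)
        = (2 * q) ^ p * P * ((2 * q) ^ p / (2 * p)!) := by ring
      _ ≤ (2 * p - 1)‼ * M * ((2 * q) ^ p / (2 * p)!) :=
          mul_le_mul_of_nonneg_right (h p) (by positivity)
      _ = M * (q ^ p / p !) := by
          rw [hfact, mul_pow]
          field_simp
  have hexp : HasSum (fun p : ℕ ↦ q ^ p / p !) (Real.exp q) := by
    rw [Real.exp_eq_exp_ℝ]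
    exact NormedSpace.expSeries_div_hasSum_exp q
  have hcosh : P * Real.cosh (2 * q) ≤ M * Real.exp q :=
    hasSum_le hterm ((Real.hasSum_cosh (2 * q)).mul_left P) (hexp.mul_left M)
  have hexp_two : Real.exp (2 * q) = Real.exp q * Real.exp q := by rw [two_mul, Real.exp_add]
  rw [Real.exp_neg, ← div_eq_mul_inv, le_div_iff₀ (Real.exp_pos q)]
  refine le_of_mul_le_mul_right ?_ (Real.exp_pos q)
  have : 0 ≤ P * Real.exp (-(2 * q)) := by positivity
  rw [Real.cosh_eq, hexp_two] at hcosh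
  linarith

end Moments

section BlockDiagonal

variable {n m : Type*}

theorem trace_fromBlocks_eq_add [Fintype n] [Fintype m] (P : Matrix n n ℝ) (Q : Matrix n m ℝ)
    (R : Matrix m n ℝ) (S : Matrix m m ℝ) : trace (fromBlocks P Q R S) = trace P + trace S := by
  simp [trace, Fintype.sum_sum_type]

theorem posSemidef_fromBlocks_zero_zero [Finite n] [Finite m] {P : Matrix n n ℝ} {Q : Matrix m m ℝ}
    (hP : P.PosSemidef) (hQ : Q.PosSemidef) : (fromBlocks P 0 0 Q).PosSemidef := by
  cases nonempty_fintype n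
  cases nonempty_fintype m
  rw [posSemidef_iff_dotProduct_mulVec] at hP hQ ⊢
  refine ⟨hP.1.fromBlocks conjTranspose_zero hQ.1, fun x ↦ ?_⟩
  rw [fromBlocks_mulVec]
  simpa [dotProduct, mulVec, Fintype.sum_sum_type] using
    add_nonneg (hP.2 fun i ↦ x (.inl i)) (hQ.2 fun j ↦ x (.inr j))

end BlockDiagonal

section OperatorNorm

variable {ι : Type*} [Fintype ι] [DecidableEq ι]

theorem norm_eq_norm_eigenvalues {M : Matrix ι ι ℝ} (hM : M.IsHermitian) :
    ‖M‖ = ‖hM.eigenvalues‖ := by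
  conv_lhs => rw [hM.spectral_theorem, Unitary.conjStarAlgAut_apply]
  rw [← Unitary.coe_star, CStarRing.norm_mul_coe_unitary, CStarRing.norm_coe_unitary_mul,
    l2_opNorm_diagonal]
  rfl

theorem trace_pow_eq_sum_eigenvalues_pow {M : Matrix ι ι ℝ} (hM : M.IsHermitian) (q : ℕ) :
    trace (M ^ q) = ∑ i, hM.eigenvalues i ^ q := by
  rw [isHermitian_pow_eq hM, trace_mul_comm, ← Matrix.mul_assoc, Unitary.coe_star_mul_self,
    Matrix.one_mul, trace_diagonal]
  rfl

theorem norm_pow_succ_le_trace_pow_succ {M : Matrix ι ι ℝ} (hM : M.PosSemidef) (p : ℕ) :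
    ‖M‖ ^ (p + 1) ≤ trace (M ^ (p + 1)) := by
  have hnonneg (i : ι) : 0 ≤ hM.isHermitian.eigenvalues i ^ (p + 1) :=
    pow_nonneg (hM.eigenvalues_nonneg i) _
  rw [norm_eq_norm_eigenvalues hM.isHermitian, trace_pow_eq_sum_eigenvalues_pow hM.isHermitian]
  rcases isEmpty_or_nonempty ι with _ | _
  · simp [Subsingleton.elim hM.isHermitian.eigenvalues 0]
  · obtain ⟨i, hi⟩ := Finite.exists_max hM.isHermitian.eigenvalues
    have hnorm : ‖hM.isHermitian.eigenvalues‖ ≤ hM.isHermitian.eigenvalues i := by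
      refine (pi_norm_le_iff_of_nonneg (hM.eigenvalues_nonneg i)).2 fun j ↦ ?_
      simpa [Real.norm_of_nonneg (hM.eigenvalues_nonneg j)] using hi j
    exact (pow_le_pow_left₀ (norm_nonneg _) hnorm _).trans
      (Finset.single_le_sum (fun j _ ↦ hnonneg j) (Finset.mem_univ i))

variable {n m : Type*} [Fintype n] [Fintype m] [DecidableEq m]

theorem norm_sq_pow_succ_le_trace (G : Matrix n m ℝ) (p : ℕ) :
    (‖G‖ ^ 2) ^ (p + 1) ≤ trace ((Gᴴ * G) ^ (p + 1)) := by
  rw [sq, ← l2_opNorm_conjTranspose_mul_self]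
  exact norm_pow_succ_le_trace_pow_succ (posSemidef_conjTranspose_mul_self G) p

theorem norm_sq_le_vec_dotProduct_vec (G : Matrix n m ℝ) : ‖G‖ ^ 2 ≤ vec G ⬝ᵥ vec G := by
  have h := norm_sq_pow_succ_le_trace G 0
  rwa [zero_add, pow_one, pow_one, conjTranspose_eq_transpose_of_trivial,
    ← vec_dotProduct_vec] at h

/-- The Hermitian dilation of a rectangular matrix, which reduces spectral norm bounds for
rectangular matrices to trace bounds for powers of square Hermitian ones. -/
def dilation {n m : Type*} (G : Matrix n m ℝ) : Matrix (n ⊕ m) (n ⊕ m) ℝ :=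
  fromBlocks 0 G Gᴴ 0

theorem isHermitian_dilation {n m : Type*} (G : Matrix n m ℝ) : (dilation G).IsHermitian := by
  simp [dilation, IsHermitian, fromBlocks_transpose]

variable [DecidableEq n]

theorem dilation_sq (G : Matrix n m ℝ) :
    dilation G ^ 2 = fromBlocks (G * Gᴴ) 0 0 (Gᴴ * G) := by
  simp [dilation, sq, fromBlocks_multiply]

theorem two_mul_norm_sq_pow_succ_le_trace (G : Matrix n m ℝ) (p : ℕ) :
    2 * (‖G‖ ^ 2) ^ (p + 1) ≤ trace (dilation G ^ (2 * p + 2)) := by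
  have hleft := norm_sq_pow_succ_le_trace Gᴴ p
  rw [l2_opNorm_conjTranspose, conjTranspose_conjTranspose] at hleft
  rw [show 2 * p + 2 = 2 * (p + 1) by ring, pow_mul, dilation_sq, fromBlocks_diagonal_pow,
    trace_fromBlocks_eq_add]
  linarith [norm_sq_pow_succ_le_trace G p]

theorem dilation_sum_smul {κ n m : Type*} [Fintype κ] (B : κ → Matrix n m ℝ) (x : κ → ℝ) :
    dilation (∑ k, x k • B k) = ∑ k, x k • dilation (B k) := by
  ext (i | i) (j | j) <;> simp [dilation, Matrix.sum_apply]

theorem sum_dilation_sq {κ : Type*} [Fintype κ] (B : κ → Matrix n m ℝ) :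
    ∑ k, dilation (B k) ^ 2
      = fromBlocks (∑ k, B k * (B k)ᴴ) 0 0 (∑ k, (B k)ᴴ * B k) := by
  simp only [dilation_sq]
  ext (i | i) (j | j) <;> simp [Matrix.sum_apply]

end OperatorNorm

section Tail

variable {n m κ : Type*} [Fintype n] [Fintype m] [DecidableEq m] [Fintype κ]

theorem trace_le_card_of_posSemidef_one_sub {V : Matrix m m ℝ} (hV : (1 - V).PosSemidef) :
    trace V ≤ Fintype.card m := by
  simpa [trace_sub, trace_one] using hV.trace_nonneg

theorem continuous_norm_sum_smul (B : κ → Matrix n m ℝ) :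
    Continuous fun x : κ → ℝ ↦ ‖∑ k, x k • B k‖ := by
  fun_prop

variable [DecidableEq n]

theorem integral_trace_dilation_pow_le {B : κ → Matrix n m ℝ}
    (hL : (1 - ∑ k, B k * (B k)ᴴ).PosSemidef) (hR : (1 - ∑ k, (B k)ᴴ * B k).PosSemidef) (p : ℕ) :
    ∫ x, trace ((∑ k, x k • dilation (B k)) ^ (2 * p + 2)) ∂piGaussian κ
      ≤ Nat.doubleFactorial (2 * p + 1) * (2 * Fintype.card m) := by
  have hV : (1 - ∑ k, dilation (B k) ^ 2).PosSemidef := by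
    rw [sum_dilation_sq, ← fromBlocks_one, sub_eq_add_neg, fromBlocks_neg,
      fromBlocks_add, neg_zero, neg_zero, add_zero, add_zero, ← sub_eq_add_neg, ← sub_eq_add_neg]
    exact posSemidef_fromBlocks_zero_zero hL hR
  have htrace : trace (∑ k, dilation (B k) ^ 2) ≤ 2 * (Fintype.card m : ℝ) := by
    have hcomm : trace (∑ k, B k * (B k)ᴴ) = trace (∑ k, (B k)ᴴ * B k) := by
      rw [trace_sum, trace_sum]
      exact Finset.sum_congr rfl fun k _ ↦ trace_mul_comm _ _
    rw [sum_dilation_sq, trace_fromBlocks_eq_add, hcomm]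
    linarith [trace_le_card_of_posSemidef_one_sub hR]
  exact (integral_trace_pow_two_mul_le (fun k ↦ isHermitian_dilation (B k)) hV p).trans
    (mul_le_mul_of_nonneg_left htrace (Nat.cast_nonneg _))

theorem measureReal_le_norm_sq_le [Nonempty m] {B : κ → Matrix n m ℝ}
    (hL : (1 - ∑ k, B k * (B k)ᴴ).PosSemidef) (hR : (1 - ∑ k, (B k)ᴴ * B k).PosSemidef)
    {q : ℝ} (hq : 0 ≤ q) :
    (piGaussian κ).real {x | 2 * q ≤ ‖∑ k, x k • B k‖ ^ 2}
      ≤ 2 * Fintype.card m * Real.exp (-q) := by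
  refine le_two_mul_mul_exp_neg_of_forall_pow_mul_le measureReal_nonneg hq fun p ↦ ?_
  rcases p with _ | p
  · have hcard : (1 : ℝ) ≤ Fintype.card m := by exact_mod_cast Fintype.card_pos
    simpa using measureReal_le_one.trans hcard
  · have hsubset : {x : κ → ℝ | 2 * q ≤ ‖∑ k, x k • B k‖ ^ 2}
        ⊆ {x | 2 * (2 * q) ^ (p + 1) ≤ trace ((∑ k, x k • dilation (B k)) ^ (2 * p + 2))} := by
      intro x hx
      rw [Set.mem_ofPred_eq, ← dilation_sum_smul]
      refine le_trans ?_ (two_mul_norm_sq_pow_succ_le_trace _ p)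
      exact mul_le_mul_of_nonneg_left (pow_le_pow_left₀ (by positivity) hx _) zero_le_two
    have hnonneg (x : κ → ℝ) : 0 ≤ trace ((∑ k, x k • dilation (B k)) ^ (2 * p + 2)) := by
      rw [← dilation_sum_smul]
      exact le_trans (by positivity) (two_mul_norm_sq_pow_succ_le_trace _ p)
    have hmarkov := mul_meas_ge_le_integral_of_nonneg (μ := piGaussian κ) (.of_forall hnonneg)
      (by simpa using integrable_trace_mul_pow (fun k ↦ dilation (B k)) 1 (2 * p + 2))
      (2 * (2 * q) ^ (p + 1))
    have := mul_le_mul_of_nonneg_left (measureReal_mono (μ := piGaussian κ) hsubset)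
      (show 0 ≤ 2 * (2 * q) ^ (p + 1) by positivity)
    have := integral_trace_dilation_pow_le hL hR p
    rw [show 2 * (p + 1) - 1 = 2 * p + 1 by lia]
    linarith

end Tail

section Laplace

open MvPolynomial

theorem integral_mul_exp_neg_gaussianReal {a : ℝ} (ha : 0 ≤ a) (f : ℝ → ℝ) :
    ∫ x, f x * Real.exp (-(a * x ^ 2)) ∂gaussianReal 0 1
      = (√(1 + 2 * a))⁻¹ * ∫ x, f ((√(1 + 2 * a))⁻¹ * x) ∂gaussianReal 0 1 := by
  set b := √(1 + 2 * a)
  have hb_pos : 0 < b := Real.sqrt_pos.2 (by linarith)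
  have hb_sq : b ^ 2 = 1 + 2 * a := Real.sq_sqrt (by linarith)
  have hdensity (y : ℝ) : gaussianPDFReal 0 1 y * Real.exp (-(a * y ^ 2))
      = gaussianPDFReal 0 1 (b * y) := by
    simp only [gaussianPDFReal_def, NNReal.coe_one, mul_one, sub_zero, mul_assoc, ← Real.exp_add,
      mul_pow, hb_sq]
    ring_nf
  have hscale := Measure.integral_comp_mul_left (fun y ↦ gaussianPDFReal 0 1 (b * y) * f y) b⁻¹
  simp only [mul_inv_cancel_left₀ hb_pos.ne', inv_inv, abs_of_pos hb_pos, smul_eq_mul] at hscale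
  simp only [integral_gaussianReal_eq_integral_smul one_ne_zero, smul_eq_mul, hscale,
    inv_mul_cancel_left₀ hb_pos.ne', ← hdensity]
  exact integral_congr_ae (.of_forall fun y ↦ by ring)

variable {κ : Type*} [Fintype κ]

theorem integrable_mul_exp_neg {α : Type*} [MeasurableSpace α] {μ : Measure α} {f g : α → ℝ}
    (hf : Integrable f μ) (hg : AEStronglyMeasurable g μ) (hg_nonneg : ∀ x, 0 ≤ g x) :
    Integrable (fun x ↦ f x * Real.exp (-g x)) μ := by
  refine hf.mul_bdd (c := 1) (Real.continuous_exp.comp_aestronglyMeasurable hg.neg) ?_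
  refine .of_forall fun x ↦ ?_
  rw [Real.norm_of_nonneg (Real.exp_pos _).le]
  exact Real.exp_le_one_iff.2 (neg_nonpos.2 (hg_nonneg x))

theorem integral_eval_mul_exp_neg_piGaussian {a : κ → ℝ} (ha : ∀ k, 0 ≤ a k)
    (p : MvPolynomial κ ℝ) :
    ∫ x, eval x p * Real.exp (-∑ k, a k * x k ^ 2) ∂piGaussian κ
      = (∏ k, (√(1 + 2 * a k))⁻¹)
        * ∫ x, eval (fun k ↦ (√(1 + 2 * a k))⁻¹ * x k) p ∂piGaussian κ := by
  have hexp_nonneg (x : κ → ℝ) : 0 ≤ ∑ k, a k * x k ^ 2 :=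
    Finset.sum_nonneg fun k _ ↦ mul_nonneg (ha k) (sq_nonneg _)
  have heval_int (p : MvPolynomial κ ℝ) :
      Integrable (fun x ↦ eval x p * Real.exp (-∑ k, a k * x k ^ 2)) (piGaussian κ) :=
    integrable_mul_exp_neg (integrable_eval_piGaussian p)
      (Continuous.aestronglyMeasurable (by fun_prop)) hexp_nonneg
  have hscaled_int (p : MvPolynomial κ ℝ) :
      Integrable (fun x ↦ eval (fun k ↦ (√(1 + 2 * a k))⁻¹ * x k) p) (piGaussian κ) := by
    refine (integrable_eval_piGaussian (bind₁ (fun k ↦ C (√(1 + 2 * a k))⁻¹ * X k) p)).congr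
      (.of_forall fun x ↦ ?_)
    simp [← aeval_eq_eval, aeval_bind₁]
  induction p using MvPolynomial.induction_on' with
  | monomial u b =>
    have hfactor (x : κ → ℝ) :
        b * (∏ k, x k ^ u k) * Real.exp (-∑ k, a k * x k ^ 2)
          = b * ∏ k, x k ^ u k * Real.exp (-(a k * x k ^ 2)) := by
      rw [← Finset.sum_neg_distrib, Real.exp_sum, Finset.prod_mul_distrib, mul_assoc]
    simp only [eval_monomial, Finsupp.prod_fintype _ _ fun _ ↦ pow_zero _, hfactor,
      integral_const_mul]
    rw [integral_fintype_prod_eq_prod fun k (y : ℝ) ↦ y ^ u k * Real.exp (-(a k * y ^ 2)),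
      integral_fintype_prod_eq_prod fun k (y : ℝ) ↦ ((√(1 + 2 * a k))⁻¹ * y) ^ u k,
      mul_left_comm, ← Finset.prod_mul_distrib]
    congr 1
    exact Finset.prod_congr rfl fun k _ ↦ integral_mul_exp_neg_gaussianReal (ha k) (· ^ u k)
  | add p q hp hq =>
    simp only [map_add, add_mul]
    rw [integral_add (heval_int p) (heval_int q), integral_add (hscaled_int p) (hscaled_int q), hp,
      hq, mul_add]

theorem integral_dotProduct_sq_mul_exp_neg_piGaussian {a : κ → ℝ} (ha : ∀ k, 0 ≤ a k)
    (c : κ → ℝ) :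
    ∫ x, (c ⬝ᵥ x) ^ 2 * Real.exp (-∑ k, a k * x k ^ 2) ∂piGaussian κ
      = ∑ i, c i ^ 2 * ((1 + 2 * a i)⁻¹ * ∏ k, (√(1 + 2 * a k))⁻¹) := by
  have h := integral_eval_mul_exp_neg_piGaussian ha (linearForm c ^ 2)
  have hscale (x : κ → ℝ) : c ⬝ᵥ (fun k ↦ (√(1 + 2 * a k))⁻¹ * x k)
      = (fun k ↦ c k * (√(1 + 2 * a k))⁻¹) ⬝ᵥ x := by
    simp only [dotProduct, mul_assoc]
  have hsq (k : κ) : (√(1 + 2 * a k))⁻¹ ^ 2 = (1 + 2 * a k)⁻¹ := by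
    rw [inv_pow, Real.sq_sqrt (by linarith [ha k])]
  simp only [map_pow, eval_linearForm, hscale, integral_dotProduct_sq_piGaussian] at h
  rw [h, dotProduct, Finset.mul_sum]
  exact Finset.sum_congr rfl fun i _ ↦ by rw [← hsq]; ring

theorem integral_exp_dotProduct_mul_I_piGaussian (c : κ → ℝ) :
    ∫ x, Complex.exp ((c ⬝ᵥ x : ℝ) * Complex.I) ∂piGaussian κ
      = Complex.exp (-(c ⬝ᵥ c : ℝ) / 2) := by
  have hnorm : ‖WithLp.toLp 2 c‖ ^ 2 = c ⬝ᵥ c := by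
    rw [EuclideanSpace.real_norm_sq_eq]
    simp only [dotProduct, sq]
  have h := charFun_stdGaussian (WithLp.toLp 2 c)
  rw [← map_pi_eq_stdGaussian, charFun_apply,
    integral_map (by fun_prop) (Continuous.aestronglyMeasurable (by fun_prop))] at h
  rw [← hnorm, Complex.ofReal_pow, ← h]
  simp [EuclideanSpace.inner_eq_star_dotProduct]

variable {ι κ' : Type*} [Fintype κ']

theorem charFunDual_map_mulVec_piGaussian [Fintype ι] [DecidableEq ι] (Q : Matrix ι κ ℝ)
    (L : StrongDual ℝ (ι → ℝ)) :
    charFunDual ((piGaussian κ).map (Q *ᵥ ·)) L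
      = Complex.exp (-(((fun i ↦ L (Pi.single i 1)) ⬝ᵥ
          (Q * Qᵀ) *ᵥ fun i ↦ L (Pi.single i 1) : ℝ)) / 2) := by
  set l : ι → ℝ := fun i ↦ L (Pi.single i 1)
  have hL (y : ι → ℝ) : L y = l ⬝ᵥ y := by
    conv_lhs => rw [pi_eq_sum_univ' y]
    simp [dotProduct, l, mul_comm]
  rw [charFunDual_apply, integral_map (by fun_prop) (Continuous.aestronglyMeasurable (by fun_prop))]
  simp only [hL, dotProduct_mulVec]
  rw [integral_exp_dotProduct_mul_I_piGaussian, ← vecMul_vecMul, vecMul_transpose,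
    dotProduct_comm (Q *ᵥ _), dotProduct_mulVec]

theorem map_mulVec_piGaussian_eq_of_mul_transpose_eq [Finite ι] {Q : Matrix ι κ ℝ}
    {R : Matrix ι κ' ℝ} (h : Q * Qᵀ = R * Rᵀ) :
    (piGaussian κ).map (Q *ᵥ ·) = (piGaussian κ').map (R *ᵥ ·) := by
  classical
  cases nonempty_fintype ι
  have := Measure.isProbabilityMeasure_map (μ := piGaussian κ) (f := (Q *ᵥ ·)) (by fun_prop)
  have := Measure.isProbabilityMeasure_map (μ := piGaussian κ') (f := (R *ᵥ ·)) (by fun_prop)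
  refine Measure.ext_of_charFunDual (funext fun L ↦ ?_)
  rw [charFunDual_map_mulVec_piGaussian, charFunDual_map_mulVec_piGaussian, h]

theorem integral_comp_mulVec_piGaussian_eq_of_mul_transpose_eq [Finite ι]
    {Q : Matrix ι κ ℝ} {R : Matrix ι κ' ℝ} (h : Q * Qᵀ = R * Rᵀ) {f : (ι → ℝ) → ℝ}
    (hf : StronglyMeasurable f) :
    ∫ x, f (Q *ᵥ x) ∂piGaussian κ = ∫ x, f (R *ᵥ x) ∂piGaussian κ' := by
  rw [← integral_map (φ := (Q *ᵥ ·)) (by fun_prop) hf.aestronglyMeasurable,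
    map_mulVec_piGaussian_eq_of_mul_transpose_eq h,
    integral_map (by fun_prop) hf.aestronglyMeasurable]

theorem exists_mul_transpose_eq_and_transpose_mul_eq_diagonal [Fintype ι] [DecidableEq ι]
    {S : Matrix ι ι ℝ} (hS : S.PosSemidef) :
    ∃ (R : Matrix ι ι ℝ) (w : ι → ℝ), (∀ i, 0 ≤ w i) ∧ R * Rᵀ = S ∧ Rᵀ * R = diagonal w := by
  set U : Matrix ι ι ℝ := ↑hS.1.eigenvectorUnitary
  set w := hS.1.eigenvalues
  have hU : Uᵀ * U = 1 := Unitary.coe_star_mul_self hS.1.eigenvectorUnitary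
  have hD : diagonal (fun i ↦ √(w i)) * diagonal (fun i ↦ √(w i)) = diagonal w := by
    simp only [diagonal_mul_diagonal, Real.mul_self_sqrt (hS.eigenvalues_nonneg _), w]
  refine ⟨U * diagonal fun i ↦ √(w i), w, hS.eigenvalues_nonneg, ?_, ?_⟩
  · conv_rhs => rw [hS.1.spectral_theorem, Unitary.conjStarAlgAut_apply]
    rw [transpose_mul, diagonal_transpose, ← Matrix.mul_assoc, Matrix.mul_assoc U, hD]
    rfl
  · rw [transpose_mul, diagonal_transpose, Matrix.mul_assoc, ← Matrix.mul_assoc Uᵀ, hU,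
      Matrix.one_mul, hD]

end Laplace

section LaplaceKernel

/-- The integrand of `betaNMT`, as a function of the Laplace variable `t`, for a single eigenvalue
`w` of a covariance matrix of trace at most `M` whose other `N` eigenvalues are all equal to
`(M - w) / N`; in `betaNMT n m`, `N = nm - 1`, `M = m` and `w = mλ`. -/
noncomputable def laplaceKernel (N M w t : ℝ) : ℝ :=
  (1 + 2 * t * (M - w) / N) ^ (-(N / 2)) * (1 + 2 * t * w) ^ (-(3 / 2 : ℝ))

variable {N M w t T : ℝ}

theorem laplaceKernel_nonneg (hN : 0 ≤ N) (hw : w ∈ Set.Icc 0 M) (ht : 0 ≤ t) :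
    0 ≤ laplaceKernel N M w t := by
  have hw_nonneg := hw.1
  have hMw := sub_nonneg.2 hw.2
  unfold laplaceKernel
  positivity

theorem intervalIntegrable_laplaceKernel (hN : 0 ≤ N) (hw : w ∈ Set.Icc 0 M) (hT : 0 ≤ T) :
    IntervalIntegrable (laplaceKernel N M w) volume 0 T := by
  have hMw := sub_nonneg.2 hw.2
  refine ContinuousOn.intervalIntegrable fun t ht ↦ ContinuousAt.continuousWithinAt ?_
  rw [Set.uIcc_of_le hT] at ht
  have ht_nonneg := ht.1
  have hw_nonneg := hw.1
  refine ContinuousAt.mul (ContinuousAt.rpow_const (by fun_prop) (.inl ?_))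
    (ContinuousAt.rpow_const (by fun_prop) (.inl ?_)) <;> positivity

variable {ι : Type*}

theorem prod_one_add_le_one_add_sum_div_rpow {s : Finset ι} {y : ι → ℝ} (hy : ∀ i ∈ s, 0 ≤ y i)
    (hs : s.Nonempty) :
    ∏ i ∈ s, (1 + y i) ≤ (1 + (∑ i ∈ s, y i) / s.card) ^ (s.card : ℝ) := by
  have hcard : (0 : ℝ) < s.card := by exact_mod_cast hs.card_pos
  have hy' (i) (hi : i ∈ s) : 0 ≤ 1 + y i := by linarith [hy i hi]
  have hmean := Real.geom_mean_le_arith_mean s (fun _ ↦ 1) (fun i ↦ 1 + y i) (fun _ _ ↦ zero_le_one)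
    (by simpa using hcard) hy'
  simp only [Real.rpow_one, Finset.sum_const, nsmul_eq_mul, mul_one, one_mul,
    Finset.sum_add_distrib, add_div, div_self hcard.ne'] at hmean
  rwa [Real.rpow_inv_le_iff_of_pos (Finset.prod_nonneg hy') ?_ hcard] at hmean
  have := Finset.sum_nonneg hy
  positivity

theorem laplaceKernel_le_inv_mul_prod_inv_sqrt [Fintype ι] {w : ι → ℝ} (hw : ∀ i, 0 ≤ w i)
    (hM : ∑ i, w i ≤ M) (hN : 0 < N) (hcard : (Fintype.card ι : ℝ) = N + 1) (ht : 0 ≤ t) (i : ι) :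
    laplaceKernel N M (w i) t ≤ (1 + 2 * (t * w i))⁻¹ * ∏ k, (√(1 + 2 * (t * w k)))⁻¹ := by
  classical
  set s := Finset.univ.erase i
  have hs : (s.card : ℝ) = N := by
    rw [Finset.cast_card_erase_of_mem (Finset.mem_univ i), Finset.card_univ, hcard,
      add_sub_cancel_right]
  have hpos (k) : 0 < 1 + 2 * (t * w k) := by have := hw k; positivity
  have hsum : ∑ k ∈ s, w k ≤ M - w i := by
    rw [Finset.sum_erase_eq_sub (Finset.mem_univ i)]
    linarith
  have hsum_nonneg : 0 ≤ ∑ k ∈ s, w k := Finset.sum_nonneg fun k _ ↦ hw k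
  have hprod : ∏ k ∈ s, (1 + 2 * (t * w k)) ≤ (1 + 2 * t * (M - w i) / N) ^ N := by
    have hs_nonempty : s.Nonempty := Finset.card_pos.1 (by exact_mod_cast hs ▸ hN)
    refine (prod_one_add_le_one_add_sum_div_rpow (fun k _ ↦ ?_) hs_nonempty).trans ?_
    · have := hw k
      positivity
    · rw [hs, ← Finset.mul_sum, ← Finset.mul_sum, ← mul_assoc]
      gcongr
  have hA : 0 ≤ 1 + 2 * t * (M - w i) / N := by
    have := hsum_nonneg.trans hsum
    positivity
  have hother : (1 + 2 * t * (M - w i) / N) ^ (-(N / 2))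
      ≤ ∏ k ∈ s, (√(1 + 2 * (t * w k)))⁻¹ := by
    rw [Finset.prod_inv_distrib, ← Real.sqrt_prod s fun k _ ↦ (hpos k).le, Real.rpow_neg hA,
      div_eq_mul_one_div N, Real.rpow_mul hA, ← Real.sqrt_eq_rpow]
    have := Finset.prod_pos fun k (_ : k ∈ s) ↦ hpos k
    gcongr
  have hself : (1 + 2 * t * w i) ^ (-(3 / 2 : ℝ))
      = (1 + 2 * (t * w i))⁻¹ * (√(1 + 2 * (t * w i)))⁻¹ := by
    rw [Real.sqrt_eq_rpow, ← Real.rpow_neg_one, ← Real.rpow_neg (hpos i).le,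
      ← Real.rpow_add (hpos i), mul_assoc 2 t]
    norm_num
  have hself_nonneg : 0 ≤ (1 + 2 * (t * w i))⁻¹ * (√(1 + 2 * (t * w i)))⁻¹ := by
    have := hpos i
    positivity
  rw [laplaceKernel, hself, ← Finset.mul_prod_erase _ _ (Finset.mem_univ i),
    ← mul_assoc (1 + 2 * (t * w i))⁻¹]
  exact (mul_comm _ _).trans_le (mul_le_mul_of_nonneg_left hother hself_nonneg)

theorem betaNMT_le_integral_laplaceKernel {n m : ℕ} (hnm : 1 ≤ n * m) (hT : 0 ≤ T)
    (hw : w ∈ Set.Icc (0 : ℝ) m) :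
    betaNMT n m T ≤ ∫ t in 0..T, laplaceKernel (n * m - 1) m w t := by
  have hN : (0 : ℝ) ≤ n * m - 1 := sub_nonneg.2 (by exact_mod_cast hnm)
  have hm : (0 : ℝ) < m := by
    exact_mod_cast Nat.pos_of_mul_pos_left hnm
  have hkernel (l t : ℝ) :
      (1 + 2 * t * m * (1 - l) / ((n : ℝ) * m - 1)) ^ (-(((n : ℝ) * m - 1) / 2))
        * (1 + 2 * t * m * l) ^ (-(3 / 2 : ℝ)) = laplaceKernel (n * m - 1) m (m * l) t := by
    rw [laplaceKernel]
    ring_nf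
  simp only [betaNMT, hkernel]
  refine (ciInf_le ⟨0, ?_⟩ ⟨w / m, by have := hw.1; positivity, (div_le_one hm).2 hw.2⟩).trans_eq ?_
  · rintro _ ⟨l, rfl⟩
    refine intervalIntegral.integral_nonneg hT fun t ht ↦ laplaceKernel_nonneg hN ⟨?_, ?_⟩ ht.1
    · exact mul_nonneg hm.le l.2.1
    · exact mul_le_of_le_one_right hm.le l.2.2
  · rw [mul_div_cancel₀ _ hm.ne']

end LaplaceKernel

section Covariance

variable {ι κ : Type*} [Fintype ι] [Fintype κ] {N M T : ℝ}

theorem dotProduct_mul_transpose_mulVec (Q : Matrix ι κ ℝ) (v : ι → ℝ) :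
    v ⬝ᵥ (Q * Qᵀ) *ᵥ v = (v ᵥ* Q) ⬝ᵥ (v ᵥ* Q) := by
  rw [← mulVec_mulVec, dotProduct_mulVec, mulVec_transpose]

theorem integrable_prod_sq_mul_exp_neg (Q : Matrix ι κ ℝ) (v : ι → ℝ) (T : ℝ) :
    Integrable (Function.uncurry fun (x : κ → ℝ) (t : ℝ) ↦
        (v ⬝ᵥ Q *ᵥ x) ^ 2 * Real.exp (-(t * (Q *ᵥ x ⬝ᵥ Q *ᵥ x))))
      ((piGaussian κ).prod (volume.restrict (Set.Ioc 0 T))) := by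
  have h := (integrable_dotProduct_pow_piGaussian (v ᵥ* Q) 2).comp_fst
    (volume.restrict (Set.Ioc 0 T))
  simp only [← dotProduct_mulVec] at h
  refine h.mono' (Continuous.aestronglyMeasurable (by unfold Function.uncurry; fun_prop)) ?_
  have hmem : ∀ᵐ p ∂((piGaussian κ).prod (volume.restrict (Set.Ioc 0 T))), p.2 ∈ Set.Ioc 0 T :=
    Measure.quasiMeasurePreserving_snd.ae (ae_restrict_mem measurableSet_Ioc)
  filter_upwards [hmem] with p hp
  rw [Function.uncurry, Real.norm_of_nonneg (by positivity)]
  refine mul_le_of_le_one_right (sq_nonneg _) (Real.exp_le_one_iff.2 (neg_nonpos.2 ?_))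
  exact mul_nonneg hp.1.le (by simpa using dotProduct_star_self_nonneg (Q *ᵥ p.1))

theorem sum_mul_laplaceKernel_le [DecidableEq κ] {R : Matrix ι κ ℝ} {w : κ → ℝ}
    (hR : Rᵀ * R = diagonal w) (hw : ∀ i, 0 ≤ w i) (hM : ∑ i, w i ≤ M) (hN : 0 < N)
    (hcard : (Fintype.card κ : ℝ) = N + 1) {t : ℝ} (ht : 0 ≤ t) (v : ι → ℝ) :
    ∑ i, (v ᵥ* R) i ^ 2 * laplaceKernel N M (w i) t
      ≤ ∫ x, (v ⬝ᵥ R *ᵥ x) ^ 2 * Real.exp (-(t * (R *ᵥ x ⬝ᵥ R *ᵥ x))) ∂piGaussian κ := by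
  have hquad (x : κ → ℝ) : t * (R *ᵥ x ⬝ᵥ R *ᵥ x) = ∑ k, t * w k * x k ^ 2 := by
    rw [dotProduct_mulVec, ← mulVec_transpose, mulVec_mulVec, hR]
    simp only [dotProduct, mulVec_diagonal, Finset.mul_sum]
    exact Finset.sum_congr rfl fun k _ ↦ by ring
  simp only [hquad, dotProduct_mulVec v]
  rw [integral_dotProduct_sq_mul_exp_neg_piGaussian fun k ↦ mul_nonneg ht (hw k)]
  gcongr with i
  exact laplaceKernel_le_inv_mul_prod_inv_sqrt hw hM hN hcard ht i

theorem sum_mul_integral_laplaceKernel_le [DecidableEq κ] {R : Matrix ι κ ℝ} {w : κ → ℝ}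
    (hR : Rᵀ * R = diagonal w) (hw : ∀ i, 0 ≤ w i) (hM : ∑ i, w i ≤ M) (hN : 0 < N)
    (hcard : (Fintype.card κ : ℝ) = N + 1) (hT : 0 ≤ T) (v : ι → ℝ) :
    ∑ i, (v ᵥ* R) i ^ 2 * ∫ t in 0..T, laplaceKernel N M (w i) t
      ≤ ∫ t in 0..T, ∫ x, (v ⬝ᵥ R *ᵥ x) ^ 2 * Real.exp (-(t * (R *ᵥ x ⬝ᵥ R *ᵥ x)))
          ∂piGaussian κ := by
  have hw_mem (i) : w i ∈ Set.Icc 0 M :=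
    ⟨hw i, (Finset.single_le_sum (fun k _ ↦ hw k) (Finset.mem_univ i)).trans hM⟩
  have hkernel (i) :
      IntervalIntegrable (fun t ↦ (v ᵥ* R) i ^ 2 * laplaceKernel N M (w i) t) volume 0 T :=
    (intervalIntegrable_laplaceKernel hN.le (hw_mem i) hT).const_mul _
  simp only [← intervalIntegral.integral_const_mul]
  rw [← intervalIntegral.integral_finsetSum fun i _ ↦ hkernel i]
  refine intervalIntegral.integral_mono_on hT ?_ ?_ fun t ht ↦
    sum_mul_laplaceKernel_le hR hw hM hN hcard ht.1 v
  · simpa only [Finset.sum_fn] using IntervalIntegrable.sum Finset.univ fun i _ ↦ hkernel i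
  · rw [intervalIntegrable_iff_integrableOn_Ioc_of_le hT]
    exact (integrable_prod_sq_mul_exp_neg R v T).integral_prod_right

theorem mul_dotProduct_mulVec_le_integral_integral (Q : Matrix ι κ ℝ) (v : ι → ℝ)
    (hM : trace (Q * Qᵀ) ≤ M) (hN : 0 < N) (hcard : (Fintype.card ι : ℝ) = N + 1) (hT : 0 ≤ T)
    {b : ℝ} (hb : ∀ w ∈ Set.Icc 0 M, b ≤ ∫ t in 0..T, laplaceKernel N M w t) :
    b * (v ⬝ᵥ (Q * Qᵀ) *ᵥ v) ≤ ∫ x, (∫ t in 0..T,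
      (v ⬝ᵥ Q *ᵥ x) ^ 2 * Real.exp (-(t * (Q *ᵥ x ⬝ᵥ Q *ᵥ x)))) ∂piGaussian κ := by
  classical
  obtain ⟨R, w, hw, hRQ, hRR⟩ := exists_mul_transpose_eq_and_transpose_mul_eq_diagonal
    (by simpa using posSemidef_self_mul_conjTranspose Q : (Q * Qᵀ).PosSemidef)
  have hsum : ∑ i, w i ≤ M := by
    rwa [← trace_diagonal, ← hRR, trace_mul_comm, hRQ]
  have hw_mem (i) : w i ∈ Set.Icc 0 M :=
    ⟨hw i, (Finset.single_le_sum (fun k _ ↦ hw k) (Finset.mem_univ i)).trans hsum⟩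
  have hlaw (t : ℝ) :=
    integral_comp_mulVec_piGaussian_eq_of_mul_transpose_eq hRQ (Continuous.stronglyMeasurable
      (f := fun y ↦ (v ⬝ᵥ y) ^ 2 * Real.exp (-(t * (y ⬝ᵥ y)))) (by fun_prop))
  calc b * (v ⬝ᵥ (Q * Qᵀ) *ᵥ v)
      = ∑ i, (v ᵥ* R) i ^ 2 * b := by
        rw [← hRQ, dotProduct_mul_transpose_mulVec, mul_comm, dotProduct, Finset.sum_mul]
        simp only [sq]
    _ ≤ ∑ i, (v ᵥ* R) i ^ 2 * ∫ t in 0..T, laplaceKernel N M (w i) t := by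
        gcongr with i
        exact hb _ (hw_mem i)
    _ ≤ ∫ t in 0..T, ∫ x, (v ⬝ᵥ Q *ᵥ x) ^ 2 * Real.exp (-(t * (Q *ᵥ x ⬝ᵥ Q *ᵥ x)))
          ∂piGaussian κ := by
        simpa only [hlaw] using sum_mul_integral_laplaceKernel_le hRR hw hsum hN hcard hT v
    _ = _ := by
        simp only [intervalIntegral.integral_of_le hT]
        exact (integral_integral_swap (integrable_prod_sq_mul_exp_neg Q v T)).symm

end Covariance

section LaplaceInversion

theorem integral_exp_neg_mul_add_exp_neg_div {s : ℝ} (hs : s ≠ 0) (T : ℝ) :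
    (∫ t in 0..T, Real.exp (-(t * s))) + Real.exp (-(T * s)) / s = s⁻¹ := by
  rw [intervalIntegral.integral_comp_mul_right (fun u ↦ Real.exp (-u)) hs,
    intervalIntegral.integral_comp_neg, integral_exp, zero_mul, neg_zero, Real.exp_zero,
    smul_eq_mul]
  ring

theorem integral_sq_mul_exp_neg_add_indicator_le {s S T q : ℝ} (y : ℝ) (hs : 0 < s) (hsS : s ≤ S)
    (hT : 0 ≤ T) :
    (∫ t in 0..T, y ^ 2 * Real.exp (-(t * S)))
        + (Set.Iio (2 * q)).indicator (fun _ ↦ Real.exp (-2 * T * q) / (2 * q) * y ^ 2) s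
      ≤ y ^ 2 / s := by
  have hlaplace : ∫ t in 0..T, Real.exp (-(t * S)) ≤ ∫ t in 0..T, Real.exp (-(t * s)) := by
    refine intervalIntegral.integral_mono_on hT (Continuous.intervalIntegrable (by fun_prop) _ _)
      (Continuous.intervalIntegrable (by fun_prop) _ _) fun t ht ↦ ?_
    have := ht.1
    gcongr
  have hremainder : (Set.Iio (2 * q)).indicator
      (fun _ ↦ Real.exp (-2 * T * q) / (2 * q) * y ^ 2) s
      ≤ y ^ 2 * (Real.exp (-(T * s)) / s) := by
    refine Set.indicator_apply_le' (fun hsq ↦ ?_) fun _ ↦ by positivity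
    rw [mul_comm, show -2 * T * q = -(T * (2 * q)) by ring]
    have := (Set.mem_Iio.1 hsq).le
    gcongr
  calc (∫ t in 0..T, y ^ 2 * Real.exp (-(t * S)))
        + (Set.Iio (2 * q)).indicator (fun _ ↦ Real.exp (-2 * T * q) / (2 * q) * y ^ 2) s
      ≤ y ^ 2 * (∫ t in 0..T, Real.exp (-(t * s))) + y ^ 2 * (Real.exp (-(T * s)) / s) := by
        rw [intervalIntegral.integral_const_mul]
        gcongr
    _ = y ^ 2 / s := by
        rw [← mul_add, integral_exp_neg_mul_add_exp_neg_div hs.ne', div_eq_mul_inv]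

end LaplaceInversion

section GaussianSeries

variable {n m κ : Type*} [Fintype n] [Fintype m] [Fintype κ]

/-- The matrix whose columns are the vectorized coefficients `vec (B k)` of the Gaussian series
`G = ∑ₖ zₖ Bₖ`, so that `vec G` is its product with `z`. -/
def vecCoeff {n m κ : Type*} (B : κ → Matrix n m ℝ) : Matrix (m × n) κ ℝ :=
  of fun p k ↦ vec (B k) p

theorem vecCoeff_mulVec {n m : Type*} (B : κ → Matrix n m ℝ) (x : κ → ℝ) :
    vecCoeff B *ᵥ x = vec (∑ k, x k • B k) := by
  ext p
  simp [vecCoeff, mulVec, dotProduct, vec, Matrix.sum_apply, mul_comm]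

theorem vecCoeff_mul_transpose {n m : Type*} (B : κ → Matrix n m ℝ) :
    vecCoeff B * (vecCoeff B)ᵀ = ∑ k, vecMulVec (vec (B k)) (vec (B k)) := by
  ext p p'
  simp [vecCoeff, mul_apply, Matrix.sum_apply, vecMulVec_apply]

theorem trace_vecCoeff_mul_transpose (B : κ → Matrix n m ℝ) :
    trace (vecCoeff B * (vecCoeff B)ᵀ) = trace (∑ k, (B k)ᵀ * B k) := by
  simp only [vecCoeff_mul_transpose, trace_sum, trace_vecMulVec, vec_dotProduct_vec]

variable [DecidableEq m]

theorem vec_dotProduct_vec_le (G : Matrix n m ℝ) :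
    vec G ⬝ᵥ vec G ≤ Fintype.card m * ‖G‖ ^ 2 := by
  have hcol (j : m) : ∑ i, G i j ^ 2 ≤ ‖G‖ ^ 2 := by
    have h := l2_opNorm_mulVec G (WithLp.toLp 2 (Pi.single j 1))
    have h' := pow_le_pow_left₀ (norm_nonneg _) h 2
    simpa [EuclideanSpace.real_norm_sq_eq] using h'
  calc vec G ⬝ᵥ vec G = ∑ j, ∑ i, G i j ^ 2 := by
        simp only [dotProduct, vec, Fintype.sum_prod_type, sq]
    _ ≤ Fintype.card m * ‖G‖ ^ 2 := by
        simpa using Finset.sum_le_sum fun j (_ : j ∈ Finset.univ) ↦ hcol j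

theorem measurable_dotProduct_vec_sq_div_norm_sq (B : κ → Matrix n m ℝ) (v : m × n → ℝ) :
    Measurable fun x : κ → ℝ ↦ (v ⬝ᵥ vec (∑ k, x k • B k)) ^ 2 / ‖∑ k, x k • B k‖ ^ 2 := by
  simp only [← vecCoeff_mulVec]
  exact (Continuous.measurable (by fun_prop)).div ((continuous_norm_sum_smul B).pow 2).measurable

theorem integrable_dotProduct_vec_sq_div_norm_sq (B : κ → Matrix n m ℝ) (v : m × n → ℝ) :
    Integrable (fun x ↦ (v ⬝ᵥ vec (∑ k, x k • B k)) ^ 2 / ‖∑ k, x k • B k‖ ^ 2)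
      (piGaussian κ) := by
  refine .of_bound (measurable_dotProduct_vec_sq_div_norm_sq B v).aestronglyMeasurable
    ((v ⬝ᵥ v) * Fintype.card m) (.of_forall fun x ↦ ?_)
  set G := ∑ k, x k • B k
  have hvv : 0 ≤ v ⬝ᵥ v := by simpa using dotProduct_star_self_nonneg v
  have hCS : (v ⬝ᵥ vec G) ^ 2 ≤ (v ⬝ᵥ v) * (vec G ⬝ᵥ vec G) := by
    simpa only [dotProduct, ← sq] using Finset.sum_mul_sq_le_sq_mul_sq Finset.univ v (vec G)
  rw [Real.norm_of_nonneg (by positivity)]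
  refine div_le_of_le_mul₀ (by positivity) (by positivity) (hCS.trans ?_)
  rw [mul_assoc]
  gcongr
  exact vec_dotProduct_vec_le G

variable [DecidableEq n]

theorem setIntegral_dotProduct_vec_sq_ge [Nonempty m] {B : κ → Matrix n m ℝ}
    (hL : (1 - ∑ k, B k * (B k)ᵀ).PosSemidef) (hR : (1 - ∑ k, (B k)ᵀ * B k).PosSemidef)
    {q : ℝ} (hq : 0 ≤ q) (v : m × n → ℝ) :
    (1 - √(6 * Fintype.card m * Real.exp (-q)))
        * (v ⬝ᵥ (∑ k, vecMulVec (vec (B k)) (vec (B k))) *ᵥ v)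
      ≤ ∫ x in {x | ‖∑ k, x k • B k‖ ^ 2 < 2 * q}, (v ⬝ᵥ vec (∑ k, x k • B k)) ^ 2
          ∂piGaussian κ := by
  have hlarge : MeasurableSet {x : κ → ℝ | 2 * q ≤ ‖∑ k, x k • B k‖ ^ 2} :=
    measurableSet_le measurable_const ((continuous_norm_sum_smul B).pow 2).measurable
  have htail : 3 * (piGaussian κ).real {x | 2 * q ≤ ‖∑ k, x k • B k‖ ^ 2}
      ≤ 6 * Fintype.card m * Real.exp (-q) := by
    linarith [measureReal_le_norm_sq_le hL hR hq]
  have hcompl : {x : κ → ℝ | ‖∑ k, x k • B k‖ ^ 2 < 2 * q}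
      = {x | 2 * q ≤ ‖∑ k, x k • B k‖ ^ 2}ᶜ := by
    ext x
    simp
  rw [← vecCoeff_mul_transpose, dotProduct_mul_transpose_mulVec, hcompl]
  simp only [← vecCoeff_mulVec, dotProduct_mulVec v]
  set c := v ᵥ* vecCoeff B
  have hcc : 0 ≤ c ⬝ᵥ c := by simpa using dotProduct_star_self_nonneg c
  rw [setIntegral_compl hlarge (integrable_dotProduct_pow_piGaussian c 2),
    integral_dotProduct_sq_piGaussian, sub_mul, one_mul]
  refine sub_le_sub_left ((setIntegral_dotProduct_sq_piGaussian_le c _).trans ?_) _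
  gcongr

theorem le_integral_dotProduct_vec_sq_div_norm_sq [Nonempty m] {B : κ → Matrix n m ℝ}
    (hL : (1 - ∑ k, B k * (B k)ᵀ).PosSemidef) (hR : (1 - ∑ k, (B k)ᵀ * B k).PosSemidef)
    {N T b q : ℝ} (hN : 0 < N) (hcard : (Fintype.card n * Fintype.card m : ℝ) = N + 1) (hT : 0 ≤ T)
    (hb : ∀ w ∈ Set.Icc (0 : ℝ) (Fintype.card m),
      b ≤ ∫ t in 0..T, laplaceKernel N (Fintype.card m) w t)
    (hq : 0 < q) (v : m × n → ℝ) :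
    (b + (1 - √(6 * Fintype.card m * Real.exp (-q))) * Real.exp (-2 * T * q) / (2 * q))
        * (v ⬝ᵥ (∑ k, vecMulVec (vec (B k)) (vec (B k))) *ᵥ v)
      ≤ ∫ x, (v ⬝ᵥ vec (∑ k, x k • B k)) ^ 2 / ‖∑ k, x k • B k‖ ^ 2 ∂piGaussian κ := by
  set F : Set (κ → ℝ) := {x | ‖∑ k, x k • B k‖ ^ 2 < 2 * q}
  set τ := v ⬝ᵥ (∑ k, vecMulVec (vec (B k)) (vec (B k))) *ᵥ v
  set K := Real.exp (-2 * T * q) / (2 * q)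
  have hF : MeasurableSet F :=
    measurableSet_lt ((continuous_norm_sum_smul B).pow 2).measurable measurable_const
  have hβ := mul_dotProduct_mulVec_le_integral_integral (vecCoeff B) v
    ((trace_vecCoeff_mul_transpose B).trans_le (trace_le_card_of_posSemidef_one_sub hR)) hN
    (by rw [Fintype.card_prod, mul_comm]; exact_mod_cast hcard) hT hb
  have hβ_int : Integrable (fun x ↦ ∫ t in 0..T, (v ⬝ᵥ vecCoeff B *ᵥ x) ^ 2
      * Real.exp (-(t * (vecCoeff B *ᵥ x ⬝ᵥ vecCoeff B *ᵥ x)))) (piGaussian κ) := by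
    simp only [intervalIntegral.integral_of_le hT]
    exact (integrable_prod_sq_mul_exp_neg (vecCoeff B) v T).integral_prod_left
  have hsq_int := integrable_dotProduct_pow_piGaussian (v ᵥ* vecCoeff B) 2
  simp only [← dotProduct_mulVec, vecCoeff_mulVec, vecCoeff_mul_transpose] at hβ hβ_int hsq_int
  have hK_int := (hsq_int.const_mul K).indicator hF
  have hsmall := setIntegral_dotProduct_vec_sq_ge hL hR hq.le v
  calc _ = b * τ + K * ((1 - √(6 * Fintype.card m * Real.exp (-q))) * τ) := by ring
    _ ≤ _ := add_le_add hβ (mul_le_mul_of_nonneg_left hsmall (by positivity))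
    _ = ∫ x, ((∫ t in 0..T, (v ⬝ᵥ vec (∑ k, x k • B k)) ^ 2
          * Real.exp (-(t * (vec (∑ k, x k • B k) ⬝ᵥ vec (∑ k, x k • B k)))))
          + F.indicator (fun x ↦ K * (v ⬝ᵥ vec (∑ k, x k • B k)) ^ 2) x) ∂piGaussian κ := by
        rw [integral_add hβ_int hK_int, integral_indicator hF, integral_const_mul]
    _ ≤ _ := by
        refine integral_mono (hβ_int.add hK_int) (integrable_dotProduct_vec_sq_div_norm_sq B v)
          fun x ↦ ?_
        rcases eq_or_ne (∑ k, x k • B k) 0 with hG | hG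
        · simp [Set.indicator, hG]
        · exact integral_sq_mul_exp_neg_add_indicator_le _ (pow_pos (norm_pos_iff.2 hG) 2)
            (norm_sq_le_vec_dotProduct_vec _) hT

end GaussianSeries

theorem sigmaMax_eq_norm {n m : ℕ} (G : Matrix (Fin n) (Fin m) ℝ) : sigmaMax G = ‖G‖ :=
  (l2_opNorm_def G).symm

theorem vecM_eq_vec {n m : ℕ} (U : Matrix (Fin n) (Fin m) ℝ) : vecM U = vec U :=
  rfl

theorem map_eq_piGaussian_of_iIndepFun {κ Ω : Type*} [Fintype κ] [MeasurableSpace Ω]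
    {μ : Measure Ω} [IsProbabilityMeasure μ] {z : κ → Ω → ℝ} (hz : ∀ k, AEMeasurable (z k) μ)
    (hindep : iIndepFun z μ) (hgauss : ∀ k, μ.map (z k) = gaussianReal 0 1) :
    μ.map (fun ω k ↦ z k ω) = piGaussian κ := by
  simp only [(iIndepFun_iff_map_fun_eq_pi_map hz).1 hindep, hgauss]

theorem stmt6_general {n m : ℕ} (hnm : 2 ≤ n * m) {κ : Type*} [Fintype κ]
    {B : κ → Matrix (Fin n) (Fin m) ℝ}
    (hR : (1 - ∑ k, (B k)ᵀ * B k).PosSemidef) (hL : (1 - ∑ k, B k * (B k)ᵀ).PosSemidef)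
    {Ω : Type*} [MeasurableSpace Ω] {μ : Measure Ω} [IsProbabilityMeasure μ] {z : κ → Ω → ℝ}
    (hindep : iIndepFun z μ) (hgauss : ∀ k, μ.map (z k) = gaussianReal 0 1)
    {T : ℝ} (hT : 0 ≤ T) {δ : ℝ} (hδ : δ ∈ Set.Ioo (0 : ℝ) (6 * m)) (v : Fin m × Fin n → ℝ) :
    (betaNMT n m T
        + (1 - √δ) * Real.exp (-2 * T * Real.log (6 * m / δ)) / (2 * Real.log (6 * m / δ)))
        * (v ⬝ᵥ (∑ k, vecMulVec (vecM (B k)) (vecM (B k))) *ᵥ v)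
      ≤ ∫ ω, (v ⬝ᵥ vecM (∑ k, z k ω • B k)) ^ 2 / sigmaMax (∑ k, z k ω • B k) ^ 2 ∂μ := by
  have hm : 0 < m := Nat.pos_of_mul_pos_left (by omega : 0 < n * m)
  have : Nonempty (Fin m) := ⟨⟨0, hm⟩⟩
  have hN : (0 : ℝ) < n * m - 1 := sub_pos.2 (by exact_mod_cast hnm)
  have hq : 0 < Real.log (6 * m / δ) := Real.log_pos ((one_lt_div hδ.1).2 hδ.2)
  have hδ_eq : 6 * m * Real.exp (-Real.log (6 * m / δ)) = δ := by
    have := hδ.1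
    rw [Real.exp_neg, Real.exp_log (by positivity)]
    field_simp
  have hz (k : κ) : AEMeasurable (z k) μ :=
    .of_map_ne_zero (hgauss k ▸ IsProbabilityMeasure.ne_zero _)
  have h := le_integral_dotProduct_vec_sq_div_norm_sq hL hR hN (by simp) hT (b := betaNMT n m T)
    (fun w hw ↦ by simpa using betaNMT_le_integral_laplaceKernel (by lia) hT (by simpa using hw))
    hq v
  rw [Fintype.card_fin, hδ_eq, ← map_eq_piGaussian_of_iIndepFun hz hindep hgauss,
    integral_map (aemeasurable_pi_lambda _ hz)
      (measurable_dotProduct_vec_sq_div_norm_sq B v).aestronglyMeasurable] at h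
  simpa only [sigmaMax_eq_norm, vecM_eq_vec] using h

/-- Theorem EC.1.
For a Gaussian matrix series `G = ∑ₖ zₖ Bₖ` with `∑ₖ Bₖᵀ Bₖ = Iₘ`,
`∑ₖ Bₖ Bₖᵀ ⪯ Iₙ` and covariance `W = ∑ₖ vec(Bₖ)vec(Bₖ)ᵀ`, for every `T ≥ 0`
and `δ ∈ (0,1)`:
`E[vec(G)vec(G)ᵀ/σmax(G)²] ⪰ (β_{n,m}(T) + (1−√δ) e^{−2T log(6m/δ)}/(2 log(6m/δ))) W`. -/
theorem stmt6 {n m r : ℕ} (hm : 1 ≤ m) (hmn : m ≤ n) (hnm2 : 2 ≤ n * m)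
    (B : Fin r → Matrix (Fin n) (Fin m) ℝ)
    (hBtB : ∑ k, (B k)ᵀ * B k = 1)
    (hBBt : ((1 : Matrix (Fin n) (Fin n) ℝ) - ∑ k, B k * (B k)ᵀ).PosSemidef)
    {Ω : Type*} [MeasurableSpace Ω] (μ : Measure Ω) [IsProbabilityMeasure μ]
    (z : Fin r → Ω → ℝ)
    (hindep : iIndepFun z μ)
    (hgauss : ∀ k, Measure.map (z k) μ = gaussianReal 0 1)
    (W : Matrix (Fin m × Fin n) (Fin m × Fin n) ℝ)
    (hW : W = ∑ k, Matrix.vecMulVec (vecM (B k)) (vecM (B k))) :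
    ∀ T : ℝ, 0 ≤ T → ∀ δ : ℝ, δ ∈ Set.Ioo (0 : ℝ) 1 →
    ∀ v : Fin m × Fin n → ℝ,
      (betaNMT n m T
          + (1 - Real.sqrt δ) * Real.exp (-2 * T * Real.log (6 * m / δ))
              / (2 * Real.log (6 * m / δ)))
          * (v ⬝ᵥ W.mulVec v)
        ≤ ∫ ω, (∑ p : Fin m × Fin n, v p * vecM (∑ k, z k ω • B k) p) ^ 2
              / (sigmaMax (∑ k, z k ω • B k)) ^ 2 ∂μ := by
  intro T hT δ hδ v
  have hδ' : δ < 6 * m := hδ.2.trans (by exact_mod_cast (by lia : 1 < 6 * m))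
  rw [hW]
  exact stmt6_general hnm2 (by simpa [hBtB] using PosSemidef.zero) hBBt hindep hgauss hT
    ⟨hδ.1, hδ'⟩ v
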